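/- arXiv:2310.16239 — 2 statements merged into one kernel-verified Lean document; each statement's English description precedes it below -/
import Mathlib

section
/- Let X ⊆ ℝⁿ be a nonempty closed convex set, f : ℝⁿ → ℝ a function, M > 0 and γ > 0, and let F(x) = f(π_X(x)) + M·‖x − π_X(x)‖^γ. If x* ∈ X is a global minimizer of f over X, then x* is a global minimizer of F over all of ℝⁿ. -/
theorem comp_add_penalty_le_of_isMinOn {E β : Type*} [AddZeroClass β] [Preorder β] [AddLeftMono β]
    {X : Set E} {f p : E → β} {π : E → E} {a : E}
    (hmin : IsMinOn f X a) (hπ : ∀ x, π x ∈ X) (hp : ∀ x, 0 ≤ p x)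
    (hπa : π a = a) (hpa : p a = 0) (y : E) :
    f (π a) + p a ≤ f (π y) + p y :=
  calc
    f (π a) + p a = f a := by rw [hπa, hpa, add_zero]
    _ ≤ f (π y) := isMinOn_iff.mp hmin (π y) (hπ y)
    _ ≤ f (π y) + p y := le_add_of_nonneg_right (hp y)

/-- `π` is a metric projection onto `X`: it sends every point to a nearest point of `X`. It is a
predicate on maps, so that it makes sense for sets whose nearest points are not unique. -/
structure IsMetricProjection {E : Type*} [PseudoMetricSpace E] (X : Set E) (π : E → E) : Prop where
  mem : ∀ x, π x ∈ X
  dist_le : ∀ x, ∀ y ∈ X, dist x (π x) ≤ dist x y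

theorem IsMetricProjection.apply_eq_self {E : Type*} [MetricSpace E] {X : Set E} {π : E → E}
    (hπ : IsMetricProjection X π) {x : E} (hx : x ∈ X) : π x = x := by
  have hdist : dist x (π x) ≤ 0 := (hπ.dist_le x x hx).trans_eq (dist_self x)
  exact (dist_le_zero.mp hdist).symm

/-- The projective exact penalty function `x ↦ f (π x) + M * d(x, π x) ^ γ`, which extends the
objective from the feasible set along `π` and penalizes infeasibility. The feasible set enters only
through its metric projection `π`. -/
noncomputable def projectivePenalty {E : Type*} [PseudoMetricSpace E] (π : E → E) (f : E → ℝ)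
    (M γ : ℝ) (x : E) : ℝ :=
  f (π x) + M * dist x (π x) ^ γ

theorem projective_penalty_minimizer_of_constrained_minimizer_general
    {E : Type*} [MetricSpace E] {X : Set E} {f : E → ℝ} {M γ : ℝ} {π : E → E} {xstar : E}
    (hM : 0 ≤ M) (hγ : 0 < γ) (hπ : IsMetricProjection X π) (hxstar : xstar ∈ X)
    (hmin : IsMinOn f X xstar) (y : E) :
    projectivePenalty π f M γ xstar ≤ projectivePenalty π f M γ y := by
  have hfixed : π xstar = xstar := hπ.apply_eq_self hxstar
  have hpenalty_nonneg (x : E) : 0 ≤ M * dist x (π x) ^ γ := by positivity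
  have hpenalty_zero : M * dist xstar (π xstar) ^ γ = 0 := by
    rw [hfixed, dist_self, Real.zero_rpow hγ.ne', mul_zero]
  exact comp_add_penalty_le_of_isMinOn hmin hπ.mem hpenalty_nonneg hfixed hpenalty_zero y

/-- If `x*` is a global minimizer of `f` over the nonempty closed
convex set `X`, then `x*` is a global minimizer of the projective exact penalty
function `F x = f (π_X x) + M * ‖x - π_X x‖ ^ γ` over all of `ℝⁿ`. -/
theorem projective_penalty_minimizer_of_constrained_minimizer
    {n : ℕ} (X : Set (EuclideanSpace ℝ (Fin n)))
    (hXne : X.Nonempty) (hXcl : IsClosed X) (hXconv : Convex ℝ X)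
    (f : EuclideanSpace ℝ (Fin n) → ℝ) (M γ : ℝ) (hM : 0 < M) (hγ : 0 < γ)
    (π : EuclideanSpace ℝ (Fin n) → EuclideanSpace ℝ (Fin n))
    (hπmem : ∀ x, π x ∈ X)
    (hπmin : ∀ x, ∀ y ∈ X, ‖x - π x‖ ≤ ‖x - y‖)
    (F : EuclideanSpace ℝ (Fin n) → ℝ)
    (hF : ∀ x, F x = f (π x) + M * ‖x - π x‖ ^ γ)
    (xstar : EuclideanSpace ℝ (Fin n)) (hxstar : xstar ∈ X)
    (hmin : ∀ y ∈ X, f xstar ≤ f y) :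
    ∀ y, F xstar ≤ F y := by
  obtain rfl : F = projectivePenalty π f M γ := by ext x; rw [hF, projectivePenalty, dist_eq_norm]
  exact projective_penalty_minimizer_of_constrained_minimizer_general hM.le hγ
    ⟨hπmem, by simpa only [dist_eq_norm] using hπmin⟩ hxstar hmin
end

section
/- Let n ≥ 1, let f(x) = Σ_{i=1}^n (1.2)^{i−1}·|x_i − 1|, and let X = {x ∈ ℝⁿ : Σ_{i=1}^n x_i ≤ b, 0 ≤ x_i ≤ 1 for all i} for a real number b with 0 ≤ b < n. Let ⌊b⌋ denote the integer part of b. Then the point x* defined by x*_i = 0 for i = 1,…,n − ⌊b⌋ − 1, x*_{n−⌊b⌋} = b − ⌊b⌋, and x*_i = 1 for i = n − ⌊b⌋ + 1,…,n, belongs to X and is a global minimizer of f over X. -/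
/-!
On the box `[0, 1]ⁿ` the objective `∑ i, w i * |x i - 1|` equals `∑ i, w i - ∑ i, w i * x i`, so
minimizing it under a budget is a fractional knapsack problem with unit prices: spend the budget on
the coordinates of largest weight, which for increasing weights are the last ones. The optimal point
is `0` before a pivot `p` and `1` after it, so its difference with any competitor changes sign only
at `p`, and `w p` serves as the Lagrange multiplier of the budget constraint.
-/

/-- The separable ravine function `∑ i, w i * |x i - 1|` with weights `w`. -/
def ravine {ι R : Type*} [Fintype ι] [CommRing R] [LinearOrder R] (w x : ι → R) : R :=
  ∑ i, w i * |x i - 1|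

/-- The feasible set of the budgeted problem: the points of the unit cube whose coordinates sum to
at most `b`. -/
def budgetBox (ι : Type*) {R : Type*} [Fintype ι] [CommRing R] [LinearOrder R] (b : R) :
    Set (ι → R) :=
  {x | ∑ i, x i ≤ b ∧ ∀ i, 0 ≤ x i ∧ x i ≤ 1}

/-- The greedy allocation of the budget `b`: fill the coordinates up to `1` starting from the last
one, and leave the fractional part of `b` in the pivot coordinate `n - ⌊b⌋₊ - 1` (counted from `0`).
The subtraction is truncated, so this is the intended point only for `⌊b⌋₊ < n`. -/
def greedyAllocation {R : Type*} [CommRing R] [LinearOrder R] [FloorSemiring R] (n : ℕ) (b : R) :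
    Fin n → R := fun i =>
  if (i : ℕ) < n - ⌊b⌋₊ - 1 then 0
  else if (i : ℕ) = n - ⌊b⌋₊ - 1 then b - ⌊b⌋₊
  else 1

theorem sum_mul_le_sum_mul_of_single_crossing {ι R : Type*} [LinearOrder ι] [CommRing R]
    [PartialOrder R] [IsOrderedRing R] {s : Finset ι} {w x y : ι → R} {p : ι} (hw : Monotone w)
    (hp : 0 ≤ w p) (hlt : ∀ i ∈ s, i < p → x i ≤ y i) (hgt : ∀ i ∈ s, p < i → y i ≤ x i)
    (hsum : ∑ i ∈ s, y i ≤ ∑ i ∈ s, x i) :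
    ∑ i ∈ s, w i * y i ≤ ∑ i ∈ s, w i * x i := by
  have hcross : ∀ i ∈ s, 0 ≤ (w i - w p) * (x i - y i) := fun i hi => by
    rcases lt_trichotomy i p with h | rfl | h
    · exact mul_nonneg_of_nonpos_of_nonpos (sub_nonpos.2 (hw h.le)) (sub_nonpos.2 (hlt i hi h))
    · rw [sub_self, zero_mul]
    · exact mul_nonneg (sub_nonneg.2 (hw h.le)) (sub_nonneg.2 (hgt i hi h))
  rw [← sub_nonneg]
  calc 0 ≤ ∑ i ∈ s, (w i - w p) * (x i - y i) + w p * (∑ i ∈ s, x i - ∑ i ∈ s, y i) :=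
        add_nonneg (Finset.sum_nonneg hcross) (mul_nonneg hp (sub_nonneg.2 hsum))
    _ = ∑ i ∈ s, w i * x i - ∑ i ∈ s, w i * y i := by
        simp only [sub_mul, mul_sub, Finset.sum_sub_distrib, Finset.mul_sum]
        ring

theorem sum_range_ite_lt_ite_eq {R : Type*} [AddCommMonoidWithOne R] (m k : ℕ) (c : R) :
    ∑ i ∈ Finset.range (m + 1 + k), (if i < m then 0 else if i = m then c else 1) = c + k := by
  have hbefore : ∑ i ∈ Finset.range m, (if i < m then 0 else if i = m then c else 1) = 0 :=
    Finset.sum_eq_zero fun i hi => if_pos (Finset.mem_range.1 hi)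
  have hafter (i : ℕ) :
      (if m + 1 + i < m then 0 else if m + 1 + i = m then c else 1) = 1 := by
    rw [if_neg (by lia), if_neg (by lia)]
  simp [Finset.sum_range_add, Finset.sum_range_succ, hbefore, hafter]

section

variable {ι R : Type*} [Fintype ι] [CommRing R] [LinearOrder R]

theorem ravine_eq_sum_sub_sum_mul [IsOrderedRing R] {w x : ι → R} (hx : ∀ i, x i ≤ 1) :
    ravine w x = ∑ i, w i - ∑ i, w i * x i := by
  rw [ravine, ← Finset.sum_sub_distrib]
  refine Finset.sum_congr rfl fun i _ => ?_
  rw [abs_of_nonpos (sub_nonpos.2 (hx i))]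
  ring

variable [FloorSemiring R] {n : ℕ} {b : R}

theorem greedyAllocation_of_lt {i : Fin n} (hi : (i : ℕ) < n - ⌊b⌋₊ - 1) :
    greedyAllocation n b i = 0 :=
  if_pos hi

theorem greedyAllocation_of_gt {i : Fin n} (hi : n - ⌊b⌋₊ - 1 < (i : ℕ)) :
    greedyAllocation n b i = 1 := by
  rw [greedyAllocation, if_neg hi.not_gt, if_neg hi.ne']

theorem sum_greedyAllocation (hb : ⌊b⌋₊ < n) : ∑ i, greedyAllocation n b i = b := by
  have hn : n - ⌊b⌋₊ - 1 + 1 + ⌊b⌋₊ = n := by lia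
  have hsum := sum_range_ite_lt_ite_eq (n - ⌊b⌋₊ - 1) ⌊b⌋₊ (b - ⌊b⌋₊)
  rwa [hn, Finset.sum_range, sub_add_cancel] at hsum

variable [IsStrictOrderedRing R]

theorem greedyAllocation_mem_budgetBox (hb₀ : 0 ≤ b) (hbn : b < n) :
    greedyAllocation n b ∈ budgetBox (Fin n) b := by
  refine ⟨(sum_greedyAllocation ((Nat.floor_lt hb₀).2 hbn)).le, fun i => ?_⟩
  have hfloor := Nat.floor_le hb₀
  have hlt_succ := Nat.lt_floor_add_one b
  unfold greedyAllocation
  split_ifs <;> constructor <;> linarith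

theorem ravine_budget_minimizer_general (hb₀ : 0 ≤ b) (hbn : b < n) {w : Fin n → R}
    (hw : Monotone w) (hw₀ : ∀ i, 0 ≤ w i) :
    greedyAllocation n b ∈ budgetBox (Fin n) b ∧
      IsMinOn (ravine w) (budgetBox (Fin n) b) (greedyAllocation n b) := by
  have hfloor : ⌊b⌋₊ < n := (Nat.floor_lt hb₀).2 hbn
  have hmem := greedyAllocation_mem_budgetBox hb₀ hbn
  refine ⟨hmem, fun y ⟨hy_sum, hy_box⟩ => ?_⟩
  let p : Fin n := ⟨n - ⌊b⌋₊ - 1, by lia⟩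
  have hgain : ∑ i, w i * y i ≤ ∑ i, w i * greedyAllocation n b i :=
    sum_mul_le_sum_mul_of_single_crossing hw (hw₀ p)
      (fun i _ hi => (greedyAllocation_of_lt hi).trans_le (hy_box i).1)
      (fun i _ hi => (hy_box i).2.trans_eq (greedyAllocation_of_gt hi).symm)
      (hy_sum.trans_eq (sum_greedyAllocation hfloor).symm)
  change ravine w _ ≤ ravine w y
  rw [ravine_eq_sum_sub_sum_mul fun i => (hmem.2 i).2,
    ravine_eq_sum_sub_sum_mul fun i => (hy_box i).2]
  exact sub_le_sub_left hgain _

end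

/-- For `n ≥ 1`, the separable ravine function
`f x = ∑ i, (1.2)^(i-1) * |x i - 1|` and the feasible set
`X = {x : ∑ i, x i ≤ b and 0 ≤ x i ≤ 1 for all i}` with `0 ≤ b < n`, the point
`x*` with (0-indexed) components `x* i = 0` for `i < n - ⌊b⌋ - 1`,
`x* (n - ⌊b⌋ - 1) = b - ⌊b⌋`, and `x* i = 1` for `i > n - ⌊b⌋ - 1`, belongs to
`X` and is a global minimizer of `f` over `X`. -/
theorem ravine_budget_minimizer
    {n : ℕ} (hn : 1 ≤ n) (b : ℝ) (hb0 : 0 ≤ b) (hbn : b < n)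
    (X : Set (EuclideanSpace ℝ (Fin n)))
    (hX : X = {x : EuclideanSpace ℝ (Fin n) |
      (∑ i : Fin n, x i) ≤ b ∧ ∀ i, 0 ≤ x i ∧ x i ≤ 1})
    (f : EuclideanSpace ℝ (Fin n) → ℝ)
    (hf : ∀ x, f x = ∑ i : Fin n, (1.2 : ℝ) ^ (i : ℕ) * |x i - 1|)
    (xstar : EuclideanSpace ℝ (Fin n))
    (hxstar : ∀ i : Fin n,
      xstar i =
        if (i : ℕ) < n - ⌊b⌋₊ - 1 then 0
        else if (i : ℕ) = n - ⌊b⌋₊ - 1 then b - ⌊b⌋₊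
        else 1) :
    xstar ∈ X ∧ ∀ y ∈ X, f xstar ≤ f y := by
  obtain ⟨hmem, hmin⟩ := ravine_budget_minimizer_general hb0 hbn
    (w := fun i => (1.2 : ℝ) ^ (i : ℕ)) (fun _ _ h => pow_le_pow_right₀ (by norm_num) h)
    (fun _ => by positivity)
  rw [← show ⇑xstar = greedyAllocation n b from funext hxstar] at hmem hmin
  subst hX
  exact ⟨hmem, fun y hy => by rw [hf, hf]; exact hmin hy⟩
end
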